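/- Assume the LAG setup with ξ_1, …, ξ_D ≥ 0 satisfying Σ_{d=1}^D ξ_d < 1, stepsize α = (1 − Σ_{d=1}^D ξ_d)/L, constants β_d = (Σ_{j=d}^D ξ_j)/(2α) for d = 1, …, D, and with 𝓛 bounded below and 𝓛* := inf 𝓛. Then for every integer K ≥ 1, min_{1 ≤ k ≤ K} ‖∇𝓛(θ^k)‖² ≤ (2L / ((1 − Σ_{d=1}^D ξ_d) K)) · (𝓛(θ^1) − 𝓛*). -/

import Mathlib

open Finset

/-!
A LAG iteration is gradient descent along an inexact direction `v`. Polarizing the inner product of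
`∇f x` and `v` in the descent lemma, `f` decreases in one step by at least
`α/2 * ‖∇f x‖² + α(1 - Lα)/2 * ‖v‖² - α/2 * ‖v - ∇f x‖²`.
The trigger condition controls the error `‖v - ∇f x‖²` by a `ξ`-weighted sum of past squared steps.
Summed over the iterations, each past step is charged at most once per delay `d`, so the errors cost
at most `∑ ξ_d` times the total of the squared steps, which the middle term pays for because
`1 - Lα ≥ ∑ ξ_d`. Exchanging the two sums in this way replaces the Lyapunov function with weights
`β_d`.
-/

section Gradient

open scoped Gradient RealInnerProductSpace

theorem gradient_fun_sum {𝕜 E ι : Type*} [RCLike 𝕜] [NormedAddCommGroup E] [InnerProductSpace 𝕜 E]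
    [CompleteSpace E] {s : Finset ι} {f : ι → E → 𝕜} {x : E}
    (hf : ∀ i ∈ s, DifferentiableAt 𝕜 (f i) x) :
    ∇ (fun z ↦ ∑ i ∈ s, f i z) x = ∑ i ∈ s, ∇ (f i) x := by
  simp only [gradient, fderiv_fun_sum hf, map_sum]

variable {E : Type*} [NormedAddCommGroup E] [InnerProductSpace ℝ E] [CompleteSpace E]
  {f : E → ℝ} {L : ℝ} {x : E}

theorem inner_gradient_add_smul_le (hL : ∀ y, ‖∇ f y - ∇ f x‖ ≤ L * ‖y - x‖) (h : E) {t : ℝ}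
    (ht : 0 ≤ t) : ⟪∇ f (x + t • h), h⟫ ≤ ⟪∇ f x, h⟫ + L * t * ‖h‖ ^ 2 := by
  have hLip : ‖∇ f (x + t • h) - ∇ f x‖ ≤ L * (t * ‖h‖) := by
    simpa [norm_smul, abs_of_nonneg ht] using hL (x + t • h)
  rw [← sub_le_iff_le_add', ← inner_sub_left]
  calc ⟪∇ f (x + t • h) - ∇ f x, h⟫ ≤ ‖∇ f (x + t • h) - ∇ f x‖ * ‖h‖ := real_inner_le_norm _ _
    _ ≤ L * (t * ‖h‖) * ‖h‖ := by gcongr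
    _ = L * t * ‖h‖ ^ 2 := by ring

theorem le_add_inner_gradient_add_sq_norm (hf : Differentiable ℝ f)
    (hL : ∀ y, ‖∇ f y - ∇ f x‖ ≤ L * ‖y - x‖) (h : E) :
    f (x + h) ≤ f x + ⟪∇ f x, h⟫ + L / 2 * ‖h‖ ^ 2 := by
  have hline (t : ℝ) : HasDerivAt (fun t : ℝ ↦ f (x + t • h)) ⟪∇ f (x + t • h), h⟫ t := by
    have hpath : HasDerivAt (fun t : ℝ ↦ x + t • h) h t := by
      simpa using ((hasDerivAt_id t).smul_const h).const_add x
    exact (hf (x + t • h)).hasGradientAt.hasFDerivAt.comp_hasDerivAt t hpath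
  have hquad (t : ℝ) : HasDerivAt (fun t : ℝ ↦ f x + t * ⟪∇ f x, h⟫ + L / 2 * ‖h‖ ^ 2 * t ^ 2)
      (⟪∇ f x, h⟫ + L * t * ‖h‖ ^ 2) t := by
    refine ((((hasDerivAt_id t).mul_const ⟪∇ f x, h⟫).const_add (f x)).add
      ((hasDerivAt_pow 2 t).const_mul (L / 2 * ‖h‖ ^ 2))).congr_deriv ?_
    push_cast
    ring
  have hle := image_le_of_deriv_right_le_deriv_boundary
    (fun t _ ↦ (hline t).continuousAt.continuousWithinAt) (fun t _ ↦ (hline t).hasDerivWithinAt)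
    (by simp) (fun t _ ↦ (hquad t).continuousAt.continuousWithinAt)
    (fun t _ ↦ (hquad t).hasDerivWithinAt) (fun t ht ↦ inner_gradient_add_smul_le hL h ht.1)
    (Set.right_mem_Icc.2 zero_le_one)
  simpa using hle

theorem apply_sub_smul_le_of_inexact_gradient (hf : Differentiable ℝ f)
    (hL : ∀ y, ‖∇ f y - ∇ f x‖ ≤ L * ‖y - x‖) (α : ℝ) (v : E) :
    f (x - α • v) ≤ f x - α / 2 * ‖∇ f x‖ ^ 2 - α * (1 - L * α) / 2 * ‖v‖ ^ 2
      + α / 2 * ‖v - ∇ f x‖ ^ 2 := by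
  have hdescent := le_add_inner_gradient_add_sq_norm hf hL (-(α • v))
  have hpolar : ‖v - ∇ f x‖ ^ 2 = ‖v‖ ^ 2 - 2 * ⟪∇ f x, v⟫ + ‖∇ f x‖ ^ 2 := by
    rw [norm_sub_sq_real, real_inner_comm]
  rw [← sub_eq_add_neg, inner_neg_right, inner_smul_right, norm_neg, norm_smul, mul_pow,
    Real.norm_eq_abs, sq_abs] at hdescent
  rw [hpolar]
  linarith

theorem half_mul_sq_norm_gradient_le_of_inexact_gradient (hf : Differentiable ℝ f)
    (hL : ∀ y, ‖∇ f y - ∇ f x‖ ≤ L * ‖y - x‖) {α s w : ℝ} {v : E} (hα : 0 < α)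
    (hLα : L * α ≤ 1 - s) (herr : ‖v - ∇ f x‖ ^ 2 ≤ 1 / α ^ 2 * w) :
    α / 2 * ‖∇ f x‖ ^ 2 ≤ f x - f (x - α • v) + (w - s * ‖α • v‖ ^ 2) / (2 * α) := by
  have hdecrease := apply_sub_smul_le_of_inexact_gradient hf hL α v
  have hspare : α * s / 2 * ‖v‖ ^ 2 ≤ α * (1 - L * α) / 2 * ‖v‖ ^ 2 := by
    gcongr
    linarith
  have herror : α / 2 * ‖v - ∇ f x‖ ^ 2 ≤ α / 2 * (1 / α ^ 2 * w) := by gcongr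
  have hcharge : (w - s * ‖α • v‖ ^ 2) / (2 * α)
      = α / 2 * (1 / α ^ 2 * w) - α * s / 2 * ‖v‖ ^ 2 := by
    rw [norm_smul, mul_pow, Real.norm_eq_abs, sq_abs]
    field_simp
  linarith

end Gradient

theorem sq_norm_sum_le_card_sq_mul {E ι : Type*} [SeminormedAddCommGroup E] (s : Finset ι)
    (v : ι → E) {b : ℝ} (hb : ∀ i ∈ s, ‖v i‖ ^ 2 ≤ b) : ‖∑ i ∈ s, v i‖ ^ 2 ≤ (#s : ℝ) ^ 2 * b :=
  calc ‖∑ i ∈ s, v i‖ ^ 2 ≤ (∑ i ∈ s, ‖v i‖) ^ 2 := by gcongr; exact norm_sum_le _ _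
    _ ≤ #s * ∑ i ∈ s, ‖v i‖ ^ 2 := sq_sum_le_card_mul_sum_sq
    _ ≤ #s * (#s • b) := by gcongr; exact sum_le_card_nsmul _ _ _ hb
    _ = (#s : ℝ) ^ 2 * b := by rw [nsmul_eq_mul]; ring

theorem mul_sInf_image_Icc_le_sum (u : ℤ → ℝ) (K : ℕ) :
    K * sInf (u '' Set.Icc 1 (K : ℤ)) ≤ ∑ i ∈ range K, u (i + 1) := by
  have hle : ∀ i ∈ range K, sInf (u '' Set.Icc 1 (K : ℤ)) ≤ u (i + 1) := fun i hi ↦ by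
    rw [mem_range] at hi
    exact csInf_le ((Set.finite_Icc _ _).image u).bddBelow
      (Set.mem_image_of_mem u ⟨by lia, by lia⟩)
  simpa using card_nsmul_le_sum _ _ _ hle

theorem sum_range_delay_le {R : Type*} [AddCommMonoid R] [PartialOrder R] [IsOrderedAddMonoid R]
    {a : ℤ → R} (ha : ∀ j, 0 ≤ a j) (ha₀ : ∀ j ≤ 0, a j = 0) (K d : ℕ) :
    ∑ i ∈ range K, a (i + 1 - d) ≤ ∑ i ∈ range K, a (i + 1) :=
  calc ∑ i ∈ range K, a (i + 1 - d)
      ≤ ∑ i ∈ range (d + K), a (i + 1 - d) :=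
        sum_le_sum_of_subset_of_nonneg (range_subset_range.2 (Nat.le_add_left K d))
          fun _ _ _ ↦ ha _
    _ = ∑ i ∈ range d, a (i + 1 - d) + ∑ i ∈ range K, a ((d + i : ℕ) + 1 - d) :=
        sum_range_add _ _ _
    _ = ∑ i ∈ range K, a (i + 1) := by
        rw [sum_eq_zero fun i hi ↦ ha₀ _ (by rw [mem_range] at hi; lia), zero_add]
        exact sum_congr rfl fun i _ ↦ congrArg a (by lia)

section DelayedSteps

variable {E : Type*} [SeminormedAddCommGroup E] {S : Finset ℕ} {ξ : ℕ → ℝ} {θ : ℤ → E}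

/-- The weighted sum of squared past steps `∑ d, ξ d * ‖θ^{k+1-d} - θ^{k-d}‖²` of the LAG trigger
condition, over an arbitrary finite set `S` of delays (`S = {1, …, D}` in LAG). -/
def delayedStepEnergy (S : Finset ℕ) (ξ : ℕ → ℝ) (θ : ℤ → E) (k : ℤ) : ℝ :=
  ∑ d ∈ S, ξ d * ‖θ (k + 1 - d) - θ (k - d)‖ ^ 2

theorem delayedStepEnergy_nonneg (hξ : ∀ d ∈ S, 0 ≤ ξ d) (k : ℤ) :
    0 ≤ delayedStepEnergy S ξ θ k :=
  sum_nonneg fun d hd ↦ mul_nonneg (hξ d hd) (sq_nonneg _)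

theorem sum_delayedStepEnergy_le (hξ : ∀ d ∈ S, 0 ≤ ξ d) (hpast : ∀ k ≤ 1, θ k = θ 1) (K : ℕ) :
    ∑ i ∈ range K, delayedStepEnergy S ξ θ (i + 1)
      ≤ (∑ d ∈ S, ξ d) * ∑ i ∈ range K, ‖θ (i + 1 + 1) - θ (i + 1)‖ ^ 2 := by
  have hstill (j : ℤ) (hj : j ≤ 0) : ‖θ (j + 1) - θ j‖ ^ 2 = 0 := by
    rw [hpast (j + 1) (by lia), hpast j (by lia), sub_self, norm_zero, zero_pow two_ne_zero]
  have hdelay (d : ℕ) : ∑ i ∈ range K, ‖θ (i + 1 + 1 - d) - θ (i + 1 - d)‖ ^ 2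
      ≤ ∑ i ∈ range K, ‖θ (i + 1 + 1) - θ (i + 1)‖ ^ 2 := by
    simpa only [sub_add_eq_add_sub] using sum_range_delay_le
      (a := fun j ↦ ‖θ (j + 1) - θ j‖ ^ 2) (fun j ↦ sq_nonneg _) hstill K d
  simp only [delayedStepEnergy]
  rw [sum_comm, sum_mul]
  simp only [← mul_sum]
  exact sum_le_sum fun d hd ↦ mul_le_mul_of_nonneg_left (hdelay d) (hξ d hd)

end DelayedSteps

section LAG

open scoped Gradient

variable {E : Type*} [NormedAddCommGroup E] [InnerProductSpace ℝ E] [CompleteSpace E]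
  {S : Finset ℕ} {ξ : ℕ → ℝ} {θ : ℤ → E} {L α : ℝ}

theorem sum_sq_norm_gradient_le_of_delayed_error {f : E → ℝ} {v : ℤ → E} (hf : Differentiable ℝ f)
    (hL : ∀ x y, ‖∇ f x - ∇ f y‖ ≤ L * ‖x - y‖) (hξ : ∀ d ∈ S, 0 ≤ ξ d) (hα : 0 < α)
    (hLα : L * α ≤ 1 - ∑ d ∈ S, ξ d) (hpast : ∀ k ≤ 1, θ k = θ 1)
    (hstep : ∀ k ≥ 1, θ (k + 1) = θ k - α • v k)
    (herr : ∀ k ≥ 1, ‖v k - ∇ f (θ k)‖ ^ 2 ≤ 1 / α ^ 2 * delayedStepEnergy S ξ θ k) (K : ℕ) :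
    α / 2 * ∑ i ∈ range K, ‖∇ f (θ (i + 1))‖ ^ 2 ≤ f (θ 1) - f (θ (K + 1)) := by
  set s := ∑ d ∈ S, ξ d
  have hdecrease (k : ℤ) (hk : 1 ≤ k) : α / 2 * ‖∇ f (θ k)‖ ^ 2 ≤ f (θ k) - f (θ (k + 1))
      + (delayedStepEnergy S ξ θ k - s * ‖θ (k + 1) - θ k‖ ^ 2) / (2 * α) := by
    rw [hstep k hk, sub_sub_cancel_left, norm_neg]
    exact half_mul_sq_norm_gradient_le_of_inexact_gradient hf (hL · (θ k)) hα hLα (herr k hk)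
  have htelescope : ∑ i ∈ range K, (f (θ (i + 1)) - f (θ (i + 1 + 1)))
      = f (θ 1) - f (θ (K + 1)) := by
    simpa using sum_range_sub' (fun i : ℕ ↦ f (θ (i + 1))) K
  have hslack := div_nonpos_of_nonpos_of_nonneg
    (sub_nonpos.2 (sum_delayedStepEnergy_le hξ hpast K)) (mul_pos two_pos hα).le
  calc α / 2 * ∑ i ∈ range K, ‖∇ f (θ (i + 1))‖ ^ 2
      ≤ ∑ i ∈ range K, (f (θ (i + 1)) - f (θ (i + 1 + 1)) + (delayedStepEnergy S ξ θ (i + 1)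
        - s * ‖θ (i + 1 + 1) - θ (i + 1)‖ ^ 2) / (2 * α)) := by
        rw [mul_sum]
        exact sum_le_sum fun i _ ↦ hdecrease (i + 1) (by lia)
    _ = f (θ 1) - f (θ (K + 1)) + (∑ i ∈ range K, delayedStepEnergy S ξ θ (i + 1)
        - s * ∑ i ∈ range K, ‖θ (i + 1 + 1) - θ (i + 1)‖ ^ 2) / (2 * α) := by
        rw [sum_add_distrib, htelescope, ← sum_div, sum_sub_distrib, ← mul_sum]
    _ ≤ f (θ 1) - f (θ (K + 1)) := add_le_of_nonpos_right hslack

theorem sInf_sq_norm_gradient_le_of_delayed_error {f : E → ℝ} {v : ℤ → E} {b : ℝ}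
    (hf : Differentiable ℝ f) (hL : ∀ x y, ‖∇ f x - ∇ f y‖ ≤ L * ‖x - y‖)
    (hb : ∀ x, b ≤ f x) (hξ : ∀ d ∈ S, 0 ≤ ξ d) (hα : 0 < α) (hLα : L * α ≤ 1 - ∑ d ∈ S, ξ d)
    (hpast : ∀ k ≤ 1, θ k = θ 1) (hstep : ∀ k ≥ 1, θ (k + 1) = θ k - α • v k)
    (herr : ∀ k ≥ 1, ‖v k - ∇ f (θ k)‖ ^ 2 ≤ 1 / α ^ 2 * delayedStepEnergy S ξ θ k)
    {K : ℕ} (hK : 1 ≤ K) :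
    sInf ((fun k ↦ ‖∇ f (θ k)‖ ^ 2) '' Set.Icc 1 (K : ℤ)) ≤ 2 / (α * K) * (f (θ 1) - b) := by
  set I := sInf ((fun k ↦ ‖∇ f (θ k)‖ ^ 2) '' Set.Icc 1 (K : ℤ))
  have : (0 : ℝ) < K := by exact_mod_cast hK
  have hbound : α / 2 * (K * I) ≤ f (θ 1) - b :=
    calc α / 2 * (K * I) ≤ α / 2 * ∑ i ∈ range K, ‖∇ f (θ (i + 1))‖ ^ 2 := by
          gcongr
          exact mul_sInf_image_Icc_le_sum (fun k ↦ ‖∇ f (θ k)‖ ^ 2) K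
      _ ≤ f (θ 1) - f (θ (K + 1)) :=
          sum_sq_norm_gradient_le_of_delayed_error hf hL hξ hα hLα hpast hstep herr K
      _ ≤ f (θ 1) - b := by gcongr; exact hb _
  calc I = 2 / (α * K) * (α / 2 * (K * I)) := by field_simp
    _ ≤ 2 / (α * K) * (f (θ 1) - b) := by gcongr

variable {ι : Type*} [Fintype ι] {ℓ : ι → E → ℝ}

theorem sq_norm_sum_gradient_sub_gradient_sum_le {w : ℝ} {x : E} {y : ι → E}
    (hℓ : ∀ m, DifferentiableAt ℝ (ℓ m) x) (hw : 0 ≤ w)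
    (hy : ∀ m, ‖∇ (ℓ m) (y m) - ∇ (ℓ m) x‖ ^ 2 ≤ 1 / (α ^ 2 * (Fintype.card ι : ℝ) ^ 2) * w) :
    ‖∑ m, ∇ (ℓ m) (y m) - ∇ (fun z ↦ ∑ m, ℓ m z) x‖ ^ 2 ≤ 1 / α ^ 2 * w := by
  set M : ℝ := (Fintype.card ι : ℝ)
  rw [gradient_fun_sum fun m _ ↦ hℓ m, ← sum_sub_distrib]
  calc _ ≤ M ^ 2 * (1 / (α ^ 2 * M ^ 2) * w) := sq_norm_sum_le_card_sq_mul univ _ fun m _ ↦ hy m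
    _ = M ^ 2 / M ^ 2 * (1 / α ^ 2 * w) := by ring
    _ ≤ 1 / α ^ 2 * w := mul_le_of_le_one_left (by positivity) (div_self_le_one _)

theorem lag_nonconvex_rate_bound_general {b : ℝ} {Mc : ℤ → Finset ι} {θhat : ℤ → ι → E}
    (hℓ : ∀ m, Differentiable ℝ (ℓ m))
    (hL : ∀ x y, ‖∇ (fun z ↦ ∑ m, ℓ m z) x - ∇ (fun z ↦ ∑ m, ℓ m z) y‖ ≤ L * ‖x - y‖)
    (hb : ∀ x, b ≤ ∑ m, ℓ m x) (hξ : ∀ d ∈ S, 0 ≤ ξ d) (hα : 0 < α)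
    (hLα : L * α ≤ 1 - ∑ d ∈ S, ξ d) (hpast : ∀ k ≤ 1, θ k = θ 1)
    (hfresh : ∀ k ≥ 1, ∀ m ∉ Mc k, θhat k m = θ k)
    (hstep : ∀ k ≥ 1, θ (k + 1) = θ k - α • ∑ m, ∇ (ℓ m) (θhat k m))
    (htrig : ∀ k ≥ 1, ∀ m ∈ Mc k, ‖∇ (ℓ m) (θhat k m) - ∇ (ℓ m) (θ k)‖ ^ 2
      ≤ 1 / (α ^ 2 * (Fintype.card ι : ℝ) ^ 2) * delayedStepEnergy S ξ θ k)
    {K : ℕ} (hK : 1 ≤ K) :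
    sInf ((fun k ↦ ‖∇ (fun z ↦ ∑ m, ℓ m z) (θ k)‖ ^ 2) '' Set.Icc 1 (K : ℤ))
      ≤ 2 / (α * K) * (∑ m, ℓ m (θ 1) - b) := by
  refine sInf_sq_norm_gradient_le_of_delayed_error (.fun_sum fun m _ ↦ hℓ m) hL hb hξ hα hLα hpast
    hstep (fun k hk ↦ ?_) hK
  have henergy := delayedStepEnergy_nonneg (θ := θ) hξ k
  refine sq_norm_sum_gradient_sub_gradient_sum_le (fun m ↦ hℓ m _) henergy fun m ↦ ?_
  by_cases hm : m ∈ Mc k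
  · exact htrig k hk m hm
  · rw [hfresh k hk m hm, sub_self, norm_zero, zero_pow two_ne_zero]
    positivity

end LAG

/-- Nonconvex rate bound of Proposition 2:
`min_{1≤k≤K} ‖∇𝓛(θ^k)‖² ≤ (2L/((1 − Σ_d ξ_d) K)) (𝓛(θ¹) − 𝓛*)`. -/
theorem lag_nonconvex_rate_bound {n : ℕ}
    (M D : ℕ) (hM : 1 ≤ M) (hD : 1 ≤ D)
    (Lf : Fin M → EuclideanSpace ℝ (Fin n) → ℝ)
    (hdiff : ∀ m, Differentiable ℝ (Lf m))
    (L : ℝ) (hL : 0 < L)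
    (hsmooth : ∀ x y, ‖gradient (fun z => ∑ m, Lf m z) x
        - gradient (fun z => ∑ m, Lf m z) y‖ ≤ L * ‖x - y‖)
    (ξ : ℕ → ℝ) (hξ : ∀ d ∈ Finset.Icc 1 D, 0 ≤ ξ d)
    (hξsum : ∑ d ∈ Finset.Icc 1 D, ξ d < 1)
    (α : ℝ) (hα : α = (1 - ∑ d ∈ Finset.Icc 1 D, ξ d) / L)
    (β : ℕ → ℝ)
    (hβ : ∀ d ∈ Finset.Icc 1 D, β d = (∑ j ∈ Finset.Icc d D, ξ j) / (2 * α))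
    (Lstar : ℝ)
    (hbdd : BddBelow (Set.range fun z => ∑ m, Lf m z))
    (hLstar : Lstar = ⨅ x, ∑ m, Lf m x)
    (θ : ℤ → EuclideanSpace ℝ (Fin n))
    (hpast : ∀ k : ℤ, k ≤ 1 → θ k = θ 1)
    (Mc : ℤ → Finset (Fin M))
    (θhat : ℤ → Fin M → EuclideanSpace ℝ (Fin n))
    (hhat0 : ∀ m, θhat 0 m = θ 1)
    (hhat : ∀ k : ℤ, 1 ≤ k → ∀ m : Fin M,
      (m ∈ Mc k → θhat k m = θhat (k - 1) m) ∧ (m ∉ Mc k → θhat k m = θ k))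
    (hupd : ∀ k : ℤ, 1 ≤ k →
      θ (k + 1) = θ k - α • ∑ m, gradient (Lf m) (θhat k m))
    (htrig : ∀ k : ℤ, 1 ≤ k → ∀ m ∈ Mc k,
      ‖gradient (Lf m) (θhat k m) - gradient (Lf m) (θ k)‖ ^ 2
        ≤ (1 / (α ^ 2 * (M : ℝ) ^ 2)) *
            ∑ d ∈ Finset.Icc 1 D, ξ d * ‖θ (k + 1 - (d : ℤ)) - θ (k - (d : ℤ))‖ ^ 2)
    :
    ∀ K : ℕ, 1 ≤ K →
      sInf ((fun k : ℤ => ‖gradient (fun z => ∑ m, Lf m z) (θ k)‖ ^ 2) '' Set.Icc 1 (K : ℤ))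
        ≤ (2 * L / ((1 - ∑ d ∈ Finset.Icc 1 D, ξ d) * (K : ℝ)))
            * ((∑ m, Lf m (θ 1)) - Lstar) := by
  intro K hK
  have hα₀ : 0 < α := hα ▸ div_pos (sub_pos.2 hξsum) hL
  have hLα : 1 - ∑ d ∈ Finset.Icc 1 D, ξ d = L * α := by rw [hα, mul_div_cancel₀ _ hL.ne']
  rw [hLα, mul_comm 2 L, mul_assoc, mul_div_mul_left _ _ hL.ne']
  exact lag_nonconvex_rate_bound_general hdiff hsmooth (fun x ↦ hLstar ▸ ciInf_le hbdd x) hξ hα₀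
    hLα.ge hpast (fun k hk m ↦ (hhat k hk m).2) hupd
    (by simpa only [Fintype.card_fin, delayedStepEnergy] using htrig) hK
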